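/- arXiv:2411.00181 — 2 statements merged into one kernel-verified Lean document; each statement's English description precedes it below -/
import Mathlib

section
/- Let (Ω, P) be a probability space, k ≥ 1 a natural number, E a finite set partitioned into k sets E_1, …, E_k, and let (X_e)_{e ∈ E} be mutually independent, integrable, everywhere-nonnegative real random variables. Let p be a real number with 0 < p, p^k + p = 1, and let t be a real number such that for every agent index i, P(X_e < t for all e ∈ E_i) = p. Define the adversarial value Z of the fully-symmetric threshold mechanism with threshold t by: Z(ω) = max over those i for which the set A_i(ω) = {e ∈ E_i : X_e(ω) ≥ t} is nonempty of min_{e ∈ A_i(ω)} X_e(ω), and Z(ω) = 0 if A_i(ω) is empty for every i. Then E[Z] ≥ p · E[max_{e ∈ E} X_e]. -/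
open MeasureTheory ProbabilityTheory

lemma aux_prod {α : Type*} (s : Finset α) (p : ℝ) (hp : 0 ≤ p) (hp1 : p ≤ 1) (g b : α → ℝ)
    (hb0 : ∀ i, 0 ≤ b i) (hb1 : ∀ i, b i ≤ 1) (hg1 : ∀ i, g i ≤ 1)
    (hgb : ∀ i, p * b i ≤ g i) :
    p * (1 - ∏ i ∈ s, (1 - b i)) ≤ 1 - ∏ i ∈ s, (1 - g i) := by
  classical
  induction s using Finset.induction_on with
  | empty => simp
  | insert a s ha ih =>
    rw [Finset.prod_insert ha, Finset.prod_insert ha]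
    have h1 : 0 ≤ ∏ i ∈ s, (1 - b i) := Finset.prod_nonneg fun i _ => by linarith [hb1 i]
    have h2 : ∏ i ∈ s, (1 - b i) ≤ 1 :=
      Finset.prod_le_one (fun i _ => by linarith [hb1 i]) (fun i _ => by linarith [hb0 i])
    have h3 : 0 ≤ ∏ i ∈ s, (1 - g i) := Finset.prod_nonneg fun i _ => by linarith [hg1 i]
    set B := ∏ i ∈ s, (1 - b i)
    set G := ∏ i ∈ s, (1 - g i)
    have h4 : (1 - g a) * G ≤ (1 - p * b a) * G :=
      mul_le_mul_of_nonneg_right (by linarith [hgb a]) h3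
    have h5 : p * b a ≤ 1 := by nlinarith [hb0 a, hb1 a]
    have h6 : (1 - p * b a) * G ≤ (1 - p * b a) * (1 - p * (1 - B)) :=
      mul_le_mul_of_nonneg_left (by linarith) (by linarith)
    have h7 : 0 ≤ p * (1 - p) * (b a * (1 - B)) :=
      mul_nonneg (mul_nonneg hp (by linarith)) (mul_nonneg (hb0 a) (by linarith))
    nlinarith

lemma aux_indep {Ω : Type*} [MeasurableSpace Ω] {μ : Measure Ω} [IsProbabilityMeasure μ]
    {ι : Type*} {k : ℕ} (agent : ι → Fin k) (X : ι → Ω → ℝ)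
    (hmeas : ∀ e, Measurable (X e)) (hindep : iIndepFun X μ) (A : Fin k → Set Ω)
    (hA : ∀ i, MeasurableSet[⨆ e ∈ agent ⁻¹' {i}, MeasurableSpace.comap (X e) inferInstance] (A i))
    (s : Finset (Fin k)) :
    μ (⋂ i ∈ s, A i) = ∏ i ∈ s, μ (A i) := by
  induction s using Finset.induction_on with
  | empty => simp
  | insert a s ha ih =>
    rw [Finset.prod_insert ha, ← ih, Finset.set_biInter_insert]
    have hd : Disjoint (agent ⁻¹' {a}) (agent ⁻¹' (s : Set (Fin k))) := by
      apply Disjoint.preimage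
      simpa using ha
    have h := indep_iSup_of_disjoint (fun e => (hmeas e).comap_le) hindep.iIndep hd
    refine (Indep_iff _ _ _).1 h _ _ (hA a) ?_
    refine Finset.measurableSet_biInter _ fun i hi => ?_
    have hle : (⨆ e ∈ agent ⁻¹' {i}, MeasurableSpace.comap (X e) inferInstance) ≤
        ⨆ e ∈ agent ⁻¹' (s : Set (Fin k)), MeasurableSpace.comap (X e) inferInstance := by
      refine biSup_mono fun e he => ?_
      have : agent e = i := he
      simpa [this] using hi
    exact hle _ (hA i)

lemma aux_group {Ω : Type*} [MeasurableSpace Ω] {μ : Measure Ω} [IsProbabilityMeasure μ]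
    {ι : Type*} [Fintype ι] [DecidableEq ι] {k : ℕ} (agent : ι → Fin k) (X : ι → Ω → ℝ)
    (hmeas : ∀ e, Measurable (X e)) (hindep : iIndepFun X μ)
    (T : ∀ i : Fin k, Set ((Finset.univ.filter (fun e => agent e = i) : Finset ι) → ℝ))
    (hT : ∀ i, MeasurableSet (T i)) :
    μ.real (⋃ i, {ω | (fun e => X e.1 ω) ∈ T i}) =
      1 - ∏ i, (1 - μ.real {ω | (fun e => X e.1 ω) ∈ T i}) := by
  have hm : ∀ i, MeasurableSet {ω | (fun e : (Finset.univ.filter (fun e => agent e = i) : Finset ι)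
      => X e.1 ω) ∈ T i} := fun i =>
    (measurable_pi_lambda (fun ω (e : (Finset.univ.filter (fun e => agent e = i) : Finset ι))
      => X e.1 ω) fun e => hmeas e.1) (hT i)
  have h2 : μ (⋂ i ∈ (Finset.univ : Finset (Fin k)),
      {ω | (fun e : (Finset.univ.filter (fun e => agent e = i) : Finset ι) => X e.1 ω) ∈ T i}ᶜ) =
      ∏ i ∈ (Finset.univ : Finset (Fin k)), μ {ω | (fun e : (Finset.univ.filter
        (fun e => agent e = i) : Finset ι) => X e.1 ω) ∈ T i}ᶜ := by
    refine aux_indep agent X hmeas hindep _ (fun i => ?_) _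
    refine MeasurableSet.compl ?_
    have hmi : Measurable[⨆ e ∈ agent ⁻¹' {i}, MeasurableSpace.comap (X e) inferInstance]
        (fun ω (e : (Finset.univ.filter (fun e => agent e = i) : Finset ι)) => X e.1 ω) := ?_
    · exact hmi (hT i)
    refine @measurable_pi_lambda _ _ _ (_) _ _ fun e => ?_
    have he : e.1 ∈ agent ⁻¹' {i} := (Finset.mem_filter.1 e.2).2
    exact measurable_iff_comap_le.2
      (le_iSup₂ (f := fun (e : ι) (_ : e ∈ agent ⁻¹' {i}) =>
        MeasurableSpace.comap (X e) inferInstance) e.1 he)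
  simp only [Finset.mem_univ, Set.iInter_true] at h2
  have h3 : μ.real (⋂ i, {ω | (fun e : (Finset.univ.filter (fun e => agent e = i) : Finset ι)
      => X e.1 ω) ∈ T i}ᶜ) = ∏ i, (1 - μ.real {ω | (fun e => X e.1 ω) ∈ T i}) := by
    rw [measureReal_def, h2, ENNReal.toReal_prod]
    refine Finset.prod_congr rfl fun i _ => ?_
    rw [← measureReal_def, probReal_compl_eq_one_sub (hm i)]
  rw [← h3, ← Set.compl_iUnion, probReal_compl_eq_one_sub (MeasurableSet.iUnion hm)]
  ring

lemma aux_single {Ω : Type*} [MeasurableSpace Ω] {μ : Measure Ω} [IsProbabilityMeasure μ]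
    {ι : Type*} [Fintype ι] [DecidableEq ι] {k : ℕ} (agent : ι → Fin k) (X : ι → Ω → ℝ)
    (hmeas : ∀ e, Measurable (X e)) (hindep : iIndepFun X μ) (p t s : ℝ) (hts : t ≤ s)
    (i : Fin k) (ht : μ.real {ω | ∀ e, agent e = i → X e ω < t} = p) :
    p * μ.real {ω | ∃ e, agent e = i ∧ s < X e ω} ≤
      μ.real {ω | (∃ e, agent e = i ∧ t ≤ X e ω) ∧ ∀ e, agent e = i → t ≤ X e ω → s < X e ω} := by
  set F : Finset ι := Finset.univ.filter (fun e => agent e = i) with hF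
  let C : ι → ι → Set ℝ := fun e e' => if e' = e then Set.Ioi s else Set.Iio t
  let D : ι → Set Ω := fun e => ⋂ e' ∈ F, X e' ⁻¹' C e e'
  have hC : ∀ e e', MeasurableSet (C e e') := by
    intro e e'
    by_cases h : e' = e <;> simp [C, h]
  have hpp : p = ∏ e ∈ F, μ.real (X e ⁻¹' Set.Iio t) := by
    rw [← ht]
    have := hindep.measure_inter_preimage_eq_mul F (sets := fun _ => Set.Iio t)
      (fun _ _ => measurableSet_Iio)
    have h2 : {ω | ∀ e, agent e = i → X e ω < t} = ⋂ e ∈ F, X e ⁻¹' Set.Iio t := by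
      ext ω; simp [hF]
    rw [h2, measureReal_def, this, ENNReal.toReal_prod]; rfl
  have hD : ∀ e ∈ F, p * μ.real (X e ⁻¹' Set.Ioi s) ≤ μ.real (D e) := by
    intro e he
    have := hindep.measure_inter_preimage_eq_mul F (sets := C e) (fun _ _ => hC _ _)
    have h1 : μ.real (D e) = ∏ e' ∈ F, μ.real (X e' ⁻¹' C e e') := by
      rw [measureReal_def, this, ENNReal.toReal_prod]; rfl
    rw [h1, hpp, ← Finset.mul_prod_erase _ _ he, ← Finset.mul_prod_erase _ _ he]
    have h2 : ∏ e' ∈ F.erase e, μ.real (X e' ⁻¹' C e e')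
        = ∏ e' ∈ F.erase e, μ.real (X e' ⁻¹' Set.Iio t) := by
      refine Finset.prod_congr rfl fun e' he' => ?_
      simp [C, (Finset.mem_erase.1 he').1]
    have h3 : C e e = Set.Ioi s := by simp [C]
    rw [h2, h3]
    have h4 : 0 ≤ ∏ e' ∈ F.erase e, μ.real (X e' ⁻¹' Set.Iio t) :=
      Finset.prod_nonneg fun _ _ => measureReal_nonneg
    have h5 : μ.real (X e ⁻¹' Set.Iio t) ≤ 1 := measureReal_le_one
    have h6 : 0 ≤ μ.real (X e ⁻¹' Set.Ioi s) := measureReal_nonneg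
    nlinarith [mul_nonneg h4 h6]
  have hDm : ∀ e, MeasurableSet (D e) := fun e =>
    Finset.measurableSet_biInter _ fun e' _ => hmeas e' (hC e e')
  have hdisj : (F : Set ι).PairwiseDisjoint D := by
    intro a ha b hb hab
    simp only [Function.onFun]
    rw [Set.disjoint_left]
    intro ω h1 h2
    simp only [D, Set.mem_iInter, Set.mem_preimage] at h1 h2
    have h3 := h1 a ha
    have h4 := h2 a ha
    simp [C, hab] at h3 h4
    linarith
  have hp0 : 0 ≤ p := ht ▸ measureReal_nonneg
  calc p * μ.real {ω | ∃ e, agent e = i ∧ s < X e ω}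
      = p * μ.real (⋃ e ∈ F, X e ⁻¹' Set.Ioi s) := by
        congr 2; ext ω; simp [hF]
    _ ≤ p * ∑ e ∈ F, μ.real (X e ⁻¹' Set.Ioi s) :=
        mul_le_mul_of_nonneg_left (measureReal_biUnion_finset_le _ _) hp0
    _ ≤ ∑ e ∈ F, μ.real (D e) := by
        rw [Finset.mul_sum]; exact Finset.sum_le_sum hD
    _ = μ.real (⋃ e ∈ F, D e) := (measureReal_biUnion_finset hdisj fun e _ => hDm e).symm
    _ ≤ _ := by
        refine measureReal_mono ?_
        intro ω hω
        simp only [Set.mem_iUnion] at hω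
        obtain ⟨e, he, hω⟩ := hω
        simp only [D, Set.mem_iInter, Set.mem_preimage] at hω
        have h1 := hω e he
        simp [C] at h1
        refine ⟨⟨e, by simpa [hF] using he, by linarith⟩, fun e' he' hte' => ?_⟩
        by_cases hee : e' = e
        · subst hee; exact h1
        · have h2 := hω e' (by simpa [hF] using he')
          simp [C, hee] at h2
          linarith

lemma aux_tail {Ω : Type*} [MeasurableSpace Ω] {μ : Measure Ω} [IsProbabilityMeasure μ]
    {ι : Type*} [Fintype ι] {k : ℕ} (agent : ι → Fin k) (X : ι → Ω → ℝ)
    (hmeas : ∀ e, Measurable (X e)) (hindep : iIndepFun X μ)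
    (p : ℝ) (hp : 0 < p) (hroot : p ^ k + p = 1) (t s : ℝ)
    (ht : ∀ i, μ.real {ω | ∀ e, agent e = i → X e ω < t} = p) :
    p * μ.real {ω | ∃ e, s < X e ω} ≤
      μ.real {ω | ∃ i : Fin k, (∃ e, agent e = i ∧ t ≤ X e ω) ∧
        ∀ e, agent e = i → t ≤ X e ω → s < X e ω} := by
  classical
  have hp1 : p ≤ 1 := by linarith [pow_pos hp k]
  rcases lt_or_ge s t with hst | hts
  · have h1 := aux_group agent X hmeas hindep (fun i => {x | ∃ e, t ≤ x e})
      (fun i => by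
        rw [Set.ofPred_exists]
        exact MeasurableSet.iUnion fun e => measurableSet_le measurable_const
          (measurable_pi_apply e))
    have h2 : ∀ i : Fin k, 1 - μ.real {ω | (fun e : (Finset.univ.filter (fun e => agent e = i) :
        Finset ι) => X e.1 ω) ∈ {x : _ → ℝ | ∃ e, t ≤ x e}} = p := by
      intro i
      rw [← probReal_compl_eq_one_sub]
      · rw [← ht i]
        congr 1
        ext ω; simp
      · refine (measurable_pi_lambda _ fun e => hmeas e.1 : Measurable fun ω =>
          (fun e : (Finset.univ.filter (fun e => agent e = i) : Finset ι) => X e.1 ω)) ?_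
        rw [Set.ofPred_exists]
        exact MeasurableSet.iUnion fun e => measurableSet_le measurable_const
          (measurable_pi_apply e)
    rw [Finset.prod_congr rfl (fun i _ => h2 i)] at h1
    simp only [Finset.prod_const, Finset.card_univ, Fintype.card_fin] at h1
    calc p * μ.real {ω | ∃ e, s < X e ω} ≤ p * 1 :=
          mul_le_mul_of_nonneg_left measureReal_le_one hp.le
      _ = 1 - p ^ k := by linarith
      _ = _ := h1.symm
      _ ≤ _ := by
        refine measureReal_mono ?_
        intro ω hω
        simp only [Set.mem_iUnion, Set.mem_ofPred_eq] at hω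
        obtain ⟨i, e, he⟩ := hω
        exact ⟨i, ⟨e.1, (Finset.mem_filter.1 e.2).2, he⟩, fun e' _ h => lt_of_lt_of_le hst h⟩
  · have hB := aux_group agent X hmeas hindep (fun i => {x | ∃ e, s < x e})
      (fun i => by
        rw [Set.ofPred_exists]
        exact MeasurableSet.iUnion fun e => measurableSet_lt measurable_const
          (measurable_pi_apply e))
    have hG := aux_group agent X hmeas hindep
      (fun i => {x | (∃ e, t ≤ x e) ∧ ∀ e, t ≤ x e → s < x e})
      (fun i => by
        refine MeasurableSet.inter (s₁ := {x : _ → ℝ | ∃ e, t ≤ x e})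
          (s₂ := {x : _ → ℝ | ∀ e, t ≤ x e → s < x e}) ?_ ?_
        · rw [Set.ofPred_exists]
          exact MeasurableSet.iUnion fun e => measurableSet_le measurable_const
            (measurable_pi_apply e)
        · rw [Set.ofPred_forall]
          exact MeasurableSet.iInter fun e => MeasurableSet.imp
            (measurableSet_le measurable_const (measurable_pi_apply e))
            (measurableSet_lt measurable_const (measurable_pi_apply e)))
    have hB' : {ω | ∃ e, s < X e ω} = ⋃ i : Fin k, {ω | (fun e : (Finset.univ.filter
        (fun e => agent e = i) : Finset ι) => X e.1 ω) ∈ {x : _ → ℝ | ∃ e, s < x e}} := by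
      ext ω; simp
    have hG' : {ω | ∃ i : Fin k, (∃ e, agent e = i ∧ t ≤ X e ω) ∧
        ∀ e, agent e = i → t ≤ X e ω → s < X e ω} = ⋃ i : Fin k, {ω | (fun e : (Finset.univ.filter
        (fun e => agent e = i) : Finset ι) => X e.1 ω) ∈
          {x : _ → ℝ | (∃ e, t ≤ x e) ∧ ∀ e, t ≤ x e → s < x e}} := by
      ext ω; simp
    rw [hB', hG', hB, hG]
    refine aux_prod _ p hp.le hp1 _ _ (fun _ => measureReal_nonneg) (fun _ => measureReal_le_one)
      (fun _ => measureReal_le_one) fun i => ?_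
    convert aux_single agent X hmeas hindep p t s hts i (ht i) using 3
    · ext ω; simp
    · ext ω; simp

theorem adversarial_threshold_mechanism_lower_bound
    {Ω : Type*} [MeasureSpace Ω] [IsProbabilityMeasure (ℙ : Measure Ω)]
    {ι : Type*} [Fintype ι] (k : ℕ) (hk : 1 ≤ k)
    (agent : ι → Fin k) (X : ι → Ω → ℝ)
    (hmeas : ∀ e, Measurable (X e))
    (hindep : iIndepFun X ℙ)
    (hint : ∀ e, Integrable (X e) ℙ)
    (hnonneg : ∀ e ω, 0 ≤ X e ω)
    (p : ℝ) (hp : 0 < p) (hroot : p ^ k + p = 1) (t : ℝ)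
    (ht : ∀ i : Fin k,
      ℙ {ω | ∀ e, agent e = i → X e ω < t} = ENNReal.ofReal p) :
    p * ∫ ω, sSup {x | ∃ e, x = X e ω} ∂ℙ ≤
      ∫ ω, sSup {v | ∃ i : Fin k, (∃ e, agent e = i ∧ t ≤ X e ω) ∧
        v = sInf {x | ∃ e, agent e = i ∧ t ≤ X e ω ∧ x = X e ω}} ∂ℙ := by
  have ht' : ∀ i, (ℙ : Measure Ω).real {ω | ∀ e, agent e = i → X e ω < t} = p := fun i => by
    rw [measureReal_def, ht i, ENNReal.toReal_ofReal hp.le]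
  set M : Ω → ℝ := fun ω => sSup {x | ∃ e, x = X e ω} with hM
  set Z : Ω → ℝ := fun ω => sSup {v | ∃ i : Fin k, (∃ e, agent e = i ∧ t ≤ X e ω) ∧
        v = sInf {x | ∃ e, agent e = i ∧ t ≤ X e ω ∧ x = X e ω}} with hZ
  have finM : ∀ ω, {x | ∃ e, x = X e ω}.Finite := fun ω =>
    (Set.finite_range (fun e => X e ω)).subset (by rintro x ⟨e, rfl⟩; exact ⟨e, rfl⟩)
  have finI : ∀ ω i, {x | ∃ e, agent e = i ∧ t ≤ X e ω ∧ x = X e ω}.Finite := fun ω i =>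
    (finM ω).subset (by rintro x ⟨e, _, _, rfl⟩; exact ⟨e, rfl⟩)
  have finZ : ∀ ω, {v | ∃ i : Fin k, (∃ e, agent e = i ∧ t ≤ X e ω) ∧
        v = sInf {x | ∃ e, agent e = i ∧ t ≤ X e ω ∧ x = X e ω}}.Finite := fun ω =>
    (Set.finite_range (fun i : Fin k =>
      sInf {x | ∃ e, agent e = i ∧ t ≤ X e ω ∧ x = X e ω})).subset
      (by rintro x ⟨i, _, rfl⟩; exact ⟨i, rfl⟩)
  have M0 : ∀ ω, 0 ≤ M ω := fun ω => Real.sSup_nonneg (by rintro x ⟨e, rfl⟩; exact hnonneg e ω)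
  have Z0 : ∀ ω, 0 ≤ Z ω := fun ω => Real.sSup_nonneg (by
    rintro x ⟨i, _, rfl⟩
    exact Real.sInf_nonneg (by rintro x ⟨e, _, _, rfl⟩; exact hnonneg e ω))
  have Mlt : ∀ s, 0 ≤ s → {ω | s < M ω} = {ω | ∃ e, s < X e ω} := by
    intro s hs
    ext ω
    simp only [Set.mem_ofPred_eq]
    constructor
    · intro h
      have hne : {x | ∃ e, x = X e ω}.Nonempty := by
        by_contra hne
        rw [Set.not_nonempty_iff_eq_empty] at hne
        simp only [hM, hne, Real.sSup_empty] at h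
        linarith
      obtain ⟨_, ⟨e, rfl⟩, h2⟩ := exists_lt_of_lt_csSup hne h
      exact ⟨e, h2⟩
    · rintro ⟨e, he⟩
      exact lt_of_lt_of_le he (le_csSup (finM ω).bddAbove ⟨e, rfl⟩)
  have Zlt : ∀ s, 0 ≤ s → {ω | s < Z ω} = {ω | ∃ i : Fin k, (∃ e, agent e = i ∧ t ≤ X e ω) ∧
        ∀ e, agent e = i → t ≤ X e ω → s < X e ω} := by
    intro s hs
    ext ω
    simp only [Set.mem_ofPred_eq]
    constructor
    · intro h
      have hne : {v | ∃ i : Fin k, (∃ e, agent e = i ∧ t ≤ X e ω) ∧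
        v = sInf {x | ∃ e, agent e = i ∧ t ≤ X e ω ∧ x = X e ω}}.Nonempty := by
        by_contra hne
        rw [Set.not_nonempty_iff_eq_empty] at hne
        simp only [hZ, hne, Real.sSup_empty] at h
        linarith
      obtain ⟨_, ⟨i, hi, rfl⟩, h2⟩ := exists_lt_of_lt_csSup hne h
      exact ⟨i, hi, fun e h3 h4 => lt_of_lt_of_le h2
        (csInf_le (finI ω i).bddBelow ⟨e, h3, h4, rfl⟩)⟩
    · rintro ⟨i, hi, h⟩
      refine lt_of_lt_of_le ?_ (le_csSup (finZ ω).bddAbove ⟨i, hi, rfl⟩)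
      obtain ⟨e, he, hte⟩ := hi
      obtain ⟨e', h1, h2, h3⟩ := Set.Nonempty.csInf_mem (s := {x | ∃ e, agent e = i ∧ t ≤ X e ω ∧ x = X e ω})
        ⟨X e ω, e, he, hte, rfl⟩ (finI ω i)
      rw [h3]
      exact h e' h1 h2
  have Mm : Measurable M := by
    refine measurable_of_Ioi fun s => ?_
    change MeasurableSet {ω | s < M ω}
    rcases lt_or_ge s 0 with hs | hs
    · have : {ω | s < M ω} = Set.univ := by
        ext ω; simpa using lt_of_lt_of_le hs (M0 ω)
      rw [this]; exact MeasurableSet.univ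
    · rw [Mlt s hs, Set.ofPred_exists]
      exact MeasurableSet.iUnion fun e => measurableSet_lt measurable_const (hmeas e)
  have Zm : Measurable Z := by
    refine measurable_of_Ioi fun s => ?_
    change MeasurableSet {ω | s < Z ω}
    rcases lt_or_ge s 0 with hs | hs
    · have : {ω | s < Z ω} = Set.univ := by
        ext ω; simpa using lt_of_lt_of_le hs (Z0 ω)
      rw [this]; exact MeasurableSet.univ
    · rw [Zlt s hs, Set.ofPred_exists]
      refine MeasurableSet.iUnion fun i => ?_
      refine MeasurableSet.inter (s₁ := {ω | ∃ e, agent e = i ∧ t ≤ X e ω})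
          (s₂ := {ω | ∀ e, agent e = i → t ≤ X e ω → s < X e ω}) ?_ ?_
      · rw [Set.ofPred_exists]
        exact MeasurableSet.iUnion fun e => MeasurableSet.inter (MeasurableSet.const _)
          (measurableSet_le measurable_const (hmeas e))
      · rw [Set.ofPred_forall]
        exact MeasurableSet.iInter fun e => MeasurableSet.imp (MeasurableSet.const _)
          (MeasurableSet.imp
          (measurableSet_le measurable_const (hmeas e))
          (measurableSet_lt measurable_const (hmeas e)))
  have Zint : Integrable Z ℙ := by
    refine (integrable_finsetSum Finset.univ fun e _ => hint e).mono' Zm.aestronglyMeasurable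
      (Filter.Eventually.of_forall fun ω => ?_)
    rw [Real.norm_of_nonneg (Z0 ω)]
    refine Real.sSup_le ?_ (Finset.sum_nonneg fun e _ => hnonneg e ω)
    rintro v ⟨i, ⟨e, he, hte⟩, rfl⟩
    refine (csInf_le (finI ω i).bddBelow ⟨e, he, hte, rfl⟩).trans ?_
    exact Finset.single_le_sum (f := fun e => X e ω) (fun e _ => hnonneg e ω) (Finset.mem_univ e)
  have key : ENNReal.ofReal p * ∫⁻ ω, ENNReal.ofReal (M ω) ∂ℙ ≤
      ∫⁻ ω, ENNReal.ofReal (Z ω) ∂ℙ := by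
    rw [lintegral_eq_lintegral_meas_lt _ (Filter.Eventually.of_forall M0) Mm.aemeasurable,
      lintegral_eq_lintegral_meas_lt _ (Filter.Eventually.of_forall Z0) Zm.aemeasurable,
      ← lintegral_const_mul' _ _ ENNReal.ofReal_ne_top]
    refine setLIntegral_mono' measurableSet_Ioi fun s hs => ?_
    have hs' : (0 : ℝ) ≤ s := le_of_lt hs
    have h := aux_tail agent X hmeas hindep p hp hroot t s ht'
    rw [← Mlt s hs', ← Zlt s hs'] at h
    rw [← ofReal_measureReal, ← ofReal_measureReal, ← ENNReal.ofReal_mul hp.le]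
    exact ENNReal.ofReal_le_ofReal h
  rw [integral_eq_lintegral_of_nonneg_ae (Filter.Eventually.of_forall M0) Mm.aestronglyMeasurable,
    integral_eq_lintegral_of_nonneg_ae (Filter.Eventually.of_forall Z0) Zm.aestronglyMeasurable]
  have h := ENNReal.toReal_mono (Zint.lintegral_lt_top).ne key
  rwa [ENNReal.toReal_mul, ENNReal.toReal_ofReal hp.le] at h
end

section
/- Let (Ω, P) be a probability space, k ≥ 1 a natural number, E a finite set, and let (X_e)_{e ∈ E} be integrable, everywhere-nonnegative real random variables and (A_e)_{e ∈ E} be random variables taking values in {1, …, k}, such that the whole family (X_e)_{e ∈ E} ∪ (A_e)_{e ∈ E} is mutually independent and each A_e is uniformly distributed on {1, …, k}. Let p be a real number with 0 < p and p^k + p = 1, and let t be a real number such that P(X_e < t for all e ∈ E) = p^k. Define the adversarial value Z of the fully-symmetric threshold mechanism with threshold t by: Z(ω) = max over those i ∈ {1, …, k} for which the set A_i(ω) = {e ∈ E : A_e(ω) = i and X_e(ω) ≥ t} is nonempty of min_{e ∈ A_i(ω)} X_e(ω), and Z(ω) = 0 if this set is empty for every i. Then E[Z] ≥ p · E[max_{e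 ∈ E} X_e]. -/
open MeasureTheory ProbabilityTheory

theorem sal_rect
    {Ω : Type*} [MeasurableSpace Ω] {μ : Measure Ω}
    {ι : Type*} (k : ℕ)
    (X : ι → Ω → ℝ) (A : ι → Ω → Fin k)
    (hindep : iIndepFun
      (m := fun s : ι ⊕ ι => Sum.rec
        (motive := fun s => MeasurableSpace (Sum.elim (fun _ : ι => ℝ) (fun _ : ι => Fin k) s))
        (fun _ => (inferInstance : MeasurableSpace ℝ))
        (fun _ => (inferInstance : MeasurableSpace (Fin k))) s)
      (fun s : ι ⊕ ι => Sum.rec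
        (motive := fun s => Ω → Sum.elim (fun _ : ι => ℝ) (fun _ : ι => Fin k) s)
        (fun e => X e) (fun e => A e) s) μ)
    (S : Finset ι) (B : ι → Set ℝ) (C : ι → Set (Fin k)) (hB : ∀ e ∈ S, MeasurableSet (B e)) :
    μ (⋂ e ∈ S, (X e ⁻¹' B e ∩ A e ⁻¹' C e)) = ∏ e ∈ S, (μ (X e ⁻¹' B e) * μ (A e ⁻¹' C e)) := by
  have := hindep.measure_inter_preimage_eq_mul (S.disjSum S)
    (sets := fun s => Sum.rec (motive := fun s => Set (Sum.elim (fun _ : ι => ℝ) (fun _ : ι => Fin k) s)) B C s)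
    (by
      rintro (e | e) h
      · exact hB e (by simpa using h)
      · exact MeasurableSet.of_discrete (α := Fin k))
  rw [Finset.prod_disjSum] at this
  rw [Finset.prod_mul_distrib]
  refine Eq.trans ?_ this
  congr 1
  ext ω
  simp only [Set.mem_iInter, Finset.mem_disjSum, Set.mem_inter_iff, Sum.forall]
  constructor
  · intro h
    exact ⟨fun e he => (h e (by simpa using he)).1, fun e he => (h e (by simpa using he)).2⟩
  · rintro ⟨h1, h2⟩ e he
    exact ⟨h1 e (by simpa using he), h2 e (by simpa using he)⟩

theorem sal_pair
    {Ω : Type*} [MeasurableSpace Ω] {μ : Measure Ω} [IsProbabilityMeasure μ]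
    {ι : Type*} (k : ℕ)
    (X : ι → Ω → ℝ) (A : ι → Ω → Fin k)
    (hXmeas : ∀ e, Measurable (X e)) (hAmeas : ∀ e, Measurable (A e))
    (hrect : ∀ (S : Finset ι) (B : ι → Set ℝ) (C : ι → Set (Fin k)),
      (∀ e ∈ S, MeasurableSet (B e)) →
      μ (⋂ e ∈ S, (X e ⁻¹' B e ∩ A e ⁻¹' C e)) =
        ∏ e ∈ S, (μ (X e ⁻¹' B e) * μ (A e ⁻¹' C e))) :
    iIndepFun (fun e ω => (X e ω, A e ω)) μ := by
  classical
  have h1 : ∀ (e : ι) (B : Set ℝ) (C : Set (Fin k)), MeasurableSet B →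
      μ (X e ⁻¹' B ∩ A e ⁻¹' C) = μ (X e ⁻¹' B) * μ (A e ⁻¹' C) := by
    intro e B C hB
    simpa using hrect {e} (fun _ => B) (fun _ => C) (by simpa using hB)
  rw [iIndepFun_iff_iIndep]
  refine iIndepSets.iIndep (fun e => ((hXmeas e).prodMk (hAmeas e)).comap_le)
    (fun e => Set.preimage (fun ω => (X e ω, A e ω)) '' 
      (Set.image2 (· ×ˢ ·) {s : Set ℝ | MeasurableSet s} {t : Set (Fin k) | MeasurableSet t}))
    (fun e => ?_) (fun e => ?_) ?_
  · have := (isPiSystem_prod (α := ℝ) (β := Fin k)).comap (fun ω => (X e ω, A e ω))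
    exact this
  · rw [← generateFrom_prod, MeasurableSpace.comap_generateFrom]
  · rw [iIndepSets_iff]
    intro S f hf
    have : ∀ e, ∃ B : Set ℝ, ∃ C : Set (Fin k), e ∈ S → (MeasurableSet B ∧ 
        f e = X e ⁻¹' B ∩ A e ⁻¹' C) := by
      intro e
      by_cases he : e ∈ S
      · obtain ⟨_, ⟨B, hB, C, hC, rfl⟩, h⟩ := hf e he
        exact ⟨B, C, fun _ => ⟨hB, h.symm⟩⟩
      · exact ⟨∅, ∅, fun h => absurd h he⟩
    choose B C h using this
    rw [Set.iInter₂_congr (fun e he => (h e he).2), hrect S B C (fun e he => (h e he).1)]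
    refine Finset.prod_congr rfl fun e he => ?_
    rw [(h e he).2, h1 e _ _ (h e he).1]

theorem sal_single
    {Ω : Type*} [MeasurableSpace Ω] {μ : Measure Ω} [IsProbabilityMeasure μ]
    (k : ℕ) (hk : 1 ≤ k)
    (X : Ω → ℝ) (A : Ω → Fin k) (hX : Measurable X) (hA : Measurable A) (i : Fin k)
    (hXA : ∀ B : Set ℝ, MeasurableSet B →
      μ.real (X ⁻¹' B ∩ A ⁻¹' {i}) = μ.real (X ⁻¹' B) * (1 / k)) (t : ℝ)
    (H : Set ℝ) (hH : MeasurableSet H) (hHt : Set.Iio t ⊆ H) :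
    (1 - (1 - μ.real (X ⁻¹' Set.Iio t)) / k) * μ.real (X ⁻¹' H) ≤
      μ.real ((fun ω => (X ω, A ω)) ⁻¹' {y | y.1 ∈ H ∧ ¬ (y.2 = i ∧ t ≤ y.1)}) := by
  have e1 : (fun ω => (X ω, A ω)) ⁻¹' {y | y.1 ∈ H ∧ ¬ (y.2 = i ∧ t ≤ y.1)}
      = (X ⁻¹' H) \ (X ⁻¹' (H \ Set.Iio t) ∩ A ⁻¹' {i}) := by
    ext ω
    simp only [Set.mem_preimage, Set.mem_ofPred_eq, Set.mem_sdiff, Set.mem_inter_iff, Set.mem_Iio,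
      Set.mem_singleton_iff, not_lt]
    tauto
  have hm : MeasurableSet (H \ Set.Iio t) := hH.diff measurableSet_Iio
  rw [e1, measureReal_sdiff (s₁ := X ⁻¹' H) (fun ω h => h.1.1) ((hX hm).inter (hA (measurableSet_singleton i))),
    hXA _ hm, Set.preimage_sdiff, measureReal_sdiff (Set.preimage_mono hHt) (hX measurableSet_Iio)]
  have hh : μ.real (X ⁻¹' H) ≤ 1 := measureReal_le_one
  have h0 : 0 ≤ μ.real (X ⁻¹' Set.Iio t) := measureReal_nonneg
  have hk' : (0:ℝ) ≤ 1 / k := by positivity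
  have : 0 ≤ (1 / k : ℝ) * (μ.real (X ⁻¹' Set.Iio t) * (1 - μ.real (X ⁻¹' H))) :=
    mul_nonneg hk' (mul_nonneg h0 (by linarith))
  rw [div_eq_mul_one_div]
  nlinarith

theorem sal_numeric {ι : Type*} [Fintype ι] [DecidableEq ι] (k : ℕ) (hk : 1 ≤ k) (p : ℝ)
    (a : ι → ℝ) (h0 : ∀ e, 0 ≤ a e) (h1 : ∀ e, a e ≤ 1) (hq : ∏ e, a e = p ^ k) (e : ι) :
    p ≤ ∏ e' ∈ Finset.univ.erase e, (1 - (1 - a e') / k) := by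
  have hk1 : (1:ℝ) ≤ k := by exact_mod_cast hk
  have hs : ∀ e', 0 ≤ 1 - (1 - a e') / k := by
    intro e'
    rw [sub_nonneg, div_le_one (by linarith)]
    linarith [h0 e']
  have hb : ∀ e', a e' ≤ (1 - (1 - a e') / k) ^ k := by
    intro e'
    have := one_add_mul_le_pow (a := - ((1 - a e') / k)) (by linarith [hs e']) k
    have h2 : (k:ℝ) * - ((1 - a e') / k) = - (1 - a e') := by
      field_simp
    rw [h2] at this
    calc a e' = 1 + -(1 - a e') := by ring
      _ ≤ _ := this
      _ = _ := by ring
  refine le_of_pow_le_pow_left₀ (n := k) (by omega) (Finset.prod_nonneg fun _ _ => hs _) ?_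
  rw [← hq, ← Finset.prod_pow, ← Finset.mul_prod_erase _ _ (Finset.mem_univ e)]
  calc a e * ∏ x ∈ Finset.univ.erase e, a x ≤ 1 * ∏ x ∈ Finset.univ.erase e, a x :=
        mul_le_mul_of_nonneg_right (h1 e) (Finset.prod_nonneg fun _ _ => h0 _)
    _ ≤ _ := by
        rw [one_mul]
        exact Finset.prod_le_prod (fun _ _ => h0 _) fun _ _ => hb _

theorem sal_key
    {Ω : Type*} [MeasurableSpace Ω] {μ : Measure Ω} [IsProbabilityMeasure μ]
    {ι : Type*} [Fintype ι] (k : ℕ) (hk : 1 ≤ k)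
    (X : ι → Ω → ℝ) (A : ι → Ω → Fin k)
    (hX : ∀ e, Measurable (X e)) (hA : ∀ e, Measurable (A e))
    (hpair : iIndepFun (fun e ω => (X e ω, A e ω)) μ)
    (hXA : ∀ e i, ∀ B : Set ℝ, MeasurableSet B →
      μ.real (X e ⁻¹' B ∩ A e ⁻¹' {i}) = μ.real (X e ⁻¹' B) * (1 / k))
    (p t : ℝ) (hp0 : 0 ≤ p) (hq : μ.real {ω | ∀ e, X e ω < t} = p ^ k) (x : ℝ) (htx : t ≤ x) :
    p * μ.real {ω | ∃ e, x < X e ω} ≤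
      μ.real {ω | ∃ i, (∃ e, A e ω = i ∧ t ≤ X e ω) ∧
        ∀ e, A e ω = i → t ≤ X e ω → x < X e ω} := by
  classical
  have hk1 : (1:ℝ) ≤ k := by exact_mod_cast hk
  have hprod : ∀ K : ι → Set (ℝ × Fin k), (∀ e, MeasurableSet (K e)) →
      μ.real (⋂ e, (fun ω => (X e ω, A e ω)) ⁻¹' K e) =
        ∏ e, μ.real ((fun ω => (X e ω, A e ω)) ⁻¹' K e) := by
    intro K hK
    have := hpair.measure_inter_preimage_eq_mul Finset.univ (sets := K) (fun e _ => hK e)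
    simp only [Finset.mem_univ, Set.iInter_true] at this
    simp only [measureReal_def, this, ENNReal.toReal_prod]
  have hprodX : ∀ B : ι → Set ℝ, (∀ e, MeasurableSet (B e)) →
      μ.real (⋂ e, X e ⁻¹' B e) = ∏ e, μ.real (X e ⁻¹' B e) := by
    intro B hB
    exact hprod (fun e => Prod.fst ⁻¹' B e) (fun e => measurable_fst (hB e))
  have hqq : ∏ e, μ.real (X e ⁻¹' Set.Iio t) = p ^ k := by
    rw [← hq, ← hprodX _ (fun _ => measurableSet_Iio)]
    congr 1; ext ω; simp
  set f := Fintype.equivFin ι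
  let H : ι → ι → Set ℝ := fun e e' =>
    if e' = e then Set.Ioi x else if f e' < f e then Set.Iic x else Set.univ
  have hHm : ∀ e e', MeasurableSet (H e e') := by
    intro e e'
    simp only [H]
    split_ifs <;> measurability
  let K : ι × Fin k → ι → Set (ℝ × Fin k) := fun q e' =>
    if e' = q.1 then Set.Ioi x ×ˢ {q.2} else {y | y.1 ∈ H q.1 e' ∧ ¬ (y.2 = q.2 ∧ t ≤ y.1)}
  have hKm : ∀ q e', MeasurableSet (K q e') := by
    intro q e'
    simp only [K]
    split_ifs
    · exact measurableSet_Ioi.prod (measurableSet_singleton _)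
    · refine MeasurableSet.inter (measurable_fst (hHm _ _)) (MeasurableSet.compl
        (MeasurableSet.inter (measurable_snd (measurableSet_singleton _))
          (measurable_fst measurableSet_Ici)))
  let G : ι × Fin k → Set Ω := fun q => ⋂ e', (fun ω => (X e' ω, A e' ω)) ⁻¹' K q e'
  have hGm : ∀ q, MeasurableSet (G q) := fun q =>
    MeasurableSet.iInter fun e' => ((hX e').prodMk (hA e')) (hKm q e')
  have hG : ∀ q : ι × Fin k,
      p * (1 / k) * μ.real (⋂ e', X e' ⁻¹' H q.1 e') ≤ μ.real (G q) := by
    rintro ⟨e, i⟩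
    simp only [G]
    rw [hprod _ (hKm _), hprodX _ (hHm _)]
    rw [← Finset.mul_prod_erase _ _ (Finset.mem_univ e),
      ← Finset.mul_prod_erase (s := Finset.univ) (a := e)
        (f := fun e' => μ.real ((fun ω => (X e' ω, A e' ω)) ⁻¹' K (e, i) e')) (Finset.mem_univ e)]
    have hee : μ.real ((fun ω => (X e ω, A e ω)) ⁻¹' K (e, i) e)
        = μ.real (X e ⁻¹' H e e) * (1 / k) := by
      rw [← hXA e i _ (hHm e e)]
      simp only [K, H, if_true]
      rfl
    have hnum := sal_numeric k hk p (fun e => μ.real (X e ⁻¹' Set.Iio t))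
      (fun _ => measureReal_nonneg) (fun _ => measureReal_le_one) hqq e
    have hother : ∀ e' ∈ Finset.univ.erase e,
        (1 - (1 - μ.real (X e' ⁻¹' Set.Iio t)) / k) * μ.real (X e' ⁻¹' H e e') ≤
        μ.real ((fun ω => (X e' ω, A e' ω)) ⁻¹' K (e, i) e') := by
      intro e' he'
      have hne : e' ≠ e := Finset.ne_of_mem_erase he'
      simp only [K, if_neg hne]
      refine sal_single k hk (X e') (A e') (hX e') (hA e') i (hXA e' i) t (H e e') (hHm _ _) ?_
      simp only [H, if_neg hne]
      split_ifs
      · exact fun y hy => (lt_of_lt_of_le hy htx).le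
      · exact Set.subset_univ _
    have hs : ∀ e', 0 ≤ 1 - (1 - μ.real (X e' ⁻¹' Set.Iio t)) / k := by
      intro e'
      rw [sub_nonneg, div_le_one (by linarith)]
      linarith [measureReal_nonneg (μ := μ) (s := X e' ⁻¹' Set.Iio t)]
    have hP := Finset.prod_le_prod (fun e' _ => mul_nonneg (hs e') measureReal_nonneg) hother
    rw [Finset.prod_mul_distrib] at hP
    have hP' := (mul_le_mul_of_nonneg_right hnum (Finset.prod_nonneg
      (fun e' (_ : e' ∈ Finset.univ.erase e) =>
        measureReal_nonneg (μ := μ) (s := X e' ⁻¹' H e e')))).trans hP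
    rw [hee]
    calc _ = μ.real (X e ⁻¹' H e e) * (1 / k) *
          (p * ∏ e' ∈ Finset.univ.erase e, μ.real (X e' ⁻¹' H e e')) := by ring
      _ ≤ _ := mul_le_mul_of_nonneg_left hP' (by positivity)
  have hsub : {ω | ∃ e, x < X e ω} ⊆ ⋃ e, ⋂ e', X e' ⁻¹' H e e' := by
    intro ω hω
    obtain ⟨e, he, hmin⟩ := Set.exists_min_image {e | x < X e ω} (fun e => f e) (Set.toFinite _) hω
    refine Set.mem_iUnion.2 ⟨e, Set.mem_iInter.2 fun e' => ?_⟩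
    simp only [H, Set.mem_preimage]
    split_ifs with h1 h2
    · rw [h1]; exact he
    · refine le_of_not_gt (α := ℝ) fun h3 => ?_
      exact absurd (hmin e' h3) (not_le.2 h2)
    · trivial
  have hdisj : Set.PairwiseDisjoint (↑(Finset.univ : Finset (ι × Fin k))) G := by
    rintro ⟨e, i⟩ - ⟨e₂, i₂⟩ - hne
    rw [Function.onFun, Set.disjoint_left]
    intro ω h1 h2
    simp only [G, Set.mem_iInter, Set.mem_preimage] at h1 h2
    apply hne
    have key : ∀ (e e₂ : ι) (i i₂ : Fin k), (∀ e', (X e' ω, A e' ω) ∈ K (e, i) e') →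
        (∀ e', (X e' ω, A e' ω) ∈ K (e₂, i₂) e') → ¬ f e < f e₂ := by
      intro e e₂ i i₂ h1 h2 hlt
      have hne : e ≠ e₂ := by rintro rfl; exact lt_irrefl _ hlt
      have a1 := h1 e
      have a2 := h2 e
      simp only [K, H, if_true, if_neg hne, if_pos hlt] at a1 a2
      have b1 : x < X e ω := a1.1
      have b2 : X e ω ≤ x := a2.1
      exact absurd b1 (not_lt.2 b2)
    have hfe : e = e₂ := f.injective (le_antisymm (not_lt.1 (key _ _ _ _ h2 h1))
      (not_lt.1 (key _ _ _ _ h1 h2)))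
    subst hfe
    have a1 := h1 e
    have a2 := h2 e
    simp only [K, if_true] at a1 a2
    have b1 : A e ω = i := a1.2
    have b2 : A e ω = i₂ := a2.2
    rw [← b1, ← b2]
  have hsub2 : (⋃ q ∈ (Finset.univ : Finset (ι × Fin k)), G q) ⊆
      {ω | ∃ i, (∃ e, A e ω = i ∧ t ≤ X e ω) ∧
        ∀ e, A e ω = i → t ≤ X e ω → x < X e ω} := by
    intro ω hω
    simp only [Set.mem_iUnion, Finset.mem_univ, exists_true_left] at hω
    obtain ⟨⟨e, i⟩, h⟩ := hω
    simp only [G, Set.mem_iInter, Set.mem_preimage] at h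
    have a := h e
    simp only [K, if_true] at a
    have a1 : x < X e ω := a.1
    refine ⟨i, ⟨e, a.2, htx.trans a1.le⟩, fun e' h1 h2 => ?_⟩
    by_cases hee : e' = e
    · rw [hee]; exact a1
    · have b := h e'
      simp only [K, if_neg hee] at b
      exact absurd ⟨h1, h2⟩ b.2
  calc p * μ.real {ω | ∃ e, x < X e ω} ≤ p * ∑ e, μ.real (⋂ e', X e' ⁻¹' H e e') :=
        mul_le_mul_of_nonneg_left ((measureReal_mono hsub).trans
          (measureReal_iUnion_fintype_le _)) hp0
    _ = ∑ q : ι × Fin k, p * (1 / k) * μ.real (⋂ e', X e' ⁻¹' H q.1 e') := by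
        rw [Fintype.sum_prod_type, Finset.mul_sum]
        refine Finset.sum_congr rfl fun e _ => ?_
        simp only [Finset.sum_const, Finset.card_univ, Fintype.card_fin, nsmul_eq_mul]
        field_simp
    _ ≤ ∑ q, μ.real (G q) := Finset.sum_le_sum fun q _ => hG q
    _ = μ.real (⋃ q ∈ (Finset.univ : Finset (ι × Fin k)), G q) :=
        (measureReal_biUnion_finset hdisj (fun q _ => hGm q)).symm
    _ ≤ _ := measureReal_mono hsub2

theorem sal_lt_sSup {V : Set ℝ} (hV : V.Finite) {x : ℝ} (hx : 0 ≤ x) :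
    x < sSup V ↔ ∃ v ∈ V, x < v := by
  constructor
  · intro h
    rcases V.eq_empty_or_nonempty with rfl | hne
    · rw [Real.sSup_empty] at h
      exact absurd h (not_lt.2 hx)
    · exact exists_lt_of_lt_csSup hne h
  · rintro ⟨v, hv, h⟩
    exact lt_csSup_of_lt hV.bddAbove hv h

theorem sal_measurable {Ω : Type*} [MeasurableSpace Ω] {f : Ω → ℝ} (hf : ∀ ω, 0 ≤ f ω)
    (h : ∀ x, 0 ≤ x → MeasurableSet {ω | x < f ω}) : Measurable f := by
  refine measurable_of_Ioi fun x => ?_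
  rcases le_or_gt 0 x with hx | hx
  · exact h x hx
  · have : f ⁻¹' Set.Ioi x = Set.univ := Set.eq_univ_of_forall fun ω => lt_of_lt_of_le hx (hf ω)
    rw [this]
    exact MeasurableSet.univ

theorem sal_integral {Ω : Type*} [MeasurableSpace Ω] {μ : Measure Ω} [IsProbabilityMeasure μ]
    {M Z : Ω → ℝ} (hM0 : ∀ ω, 0 ≤ M ω) (hZ0 : ∀ ω, 0 ≤ Z ω) (hM : Measurable M)
    (hZ : Measurable Z) (hZi : Integrable Z μ) (p : ℝ) (hp : 0 ≤ p)
    (h : ∀ x, 0 < x → p * μ.real {ω | x < M ω} ≤ μ.real {ω | x < Z ω}) :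
    p * ∫ ω, M ω ∂μ ≤ ∫ ω, Z ω ∂μ := by
  rw [integral_eq_lintegral_of_nonneg_ae (.of_forall hM0) hM.aestronglyMeasurable,
    integral_eq_lintegral_of_nonneg_ae (.of_forall hZ0) hZ.aestronglyMeasurable]
  have hfin : ∫⁻ ω, ENNReal.ofReal (Z ω) ∂μ ≠ ⊤ := by
    have := hZi.lintegral_lt_top
    exact this.ne
  have key : ENNReal.ofReal p * ∫⁻ ω, ENNReal.ofReal (M ω) ∂μ ≤ ∫⁻ ω, ENNReal.ofReal (Z ω) ∂μ := by
    rw [lintegral_eq_lintegral_meas_lt μ (.of_forall hM0) hM.aemeasurable,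
      lintegral_eq_lintegral_meas_lt μ (.of_forall hZ0) hZ.aemeasurable,
      ← lintegral_const_mul' _ _ ENNReal.ofReal_ne_top]
    refine setLIntegral_mono' measurableSet_Ioi fun x hx => ?_
    have := ENNReal.ofReal_le_ofReal (h x hx)
    rwa [ENNReal.ofReal_mul hp, ofReal_measureReal, ofReal_measureReal] at this
  have := ENNReal.toReal_mono hfin key
  rwa [ENNReal.toReal_mul, ENNReal.toReal_ofReal hp] at this



/-- Shuffled adversarial lower bound: element values `X e` and uniformly random agent
assignments `A e` are all mutually independent; with `p` the positive root of
`p ^ k + p - 1 = 0` and `t` a threshold with `P(∀ e, X e < t) = p ^ k`, the adversarial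
value of the fully-symmetric threshold mechanism with threshold `t` — the largest, over
agents `i` assigned at least one element of value `≥ t`, of the least such value assigned
to `i` (with `sSup ∅ = 0` in Mathlib's real numbers) — has expectation at least
`p · E[max_e X e]`. -/
theorem shuffled_adversarial_lower_bound
    {Ω : Type*} [MeasureSpace Ω] [IsProbabilityMeasure (ℙ : Measure Ω)]
    {ι : Type*} [Fintype ι] (k : ℕ) (hk : 1 ≤ k)
    (X : ι → Ω → ℝ) (A : ι → Ω → Fin k)
    (hXmeas : ∀ e, Measurable (X e)) (hAmeas : ∀ e, Measurable (A e))
    (hint : ∀ e, Integrable (X e) ℙ)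
    (hnonneg : ∀ e ω, 0 ≤ X e ω)
    (hindep : iIndepFun
      (m := fun s : ι ⊕ ι => Sum.rec
        (motive := fun s => MeasurableSpace (Sum.elim (fun _ : ι => ℝ) (fun _ : ι => Fin k) s))
        (fun _ => (inferInstance : MeasurableSpace ℝ))
        (fun _ => (inferInstance : MeasurableSpace (Fin k))) s)
      (fun s : ι ⊕ ι => Sum.rec
        (motive := fun s => Ω → Sum.elim (fun _ : ι => ℝ) (fun _ : ι => Fin k) s)
        (fun e => X e) (fun e => A e) s) ℙ)
    (hunif : ∀ (e : ι) (i : Fin k), ℙ {ω | A e ω = i} = (k : ENNReal)⁻¹)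
    (p : ℝ) (hp : 0 < p) (hroot : p ^ k + p = 1) (t : ℝ)
    (ht : ℙ {ω | ∀ e, X e ω < t} = ENNReal.ofReal (p ^ k)) :
    p * ∫ ω, sSup {x | ∃ e, x = X e ω} ∂ℙ ≤
      ∫ ω, sSup {v | ∃ i : Fin k, (∃ e, A e ω = i ∧ t ≤ X e ω) ∧
        v = sInf {x | ∃ e, A e ω = i ∧ t ≤ X e ω ∧ x = X e ω}} ∂ℙ := by
  have hrect := sal_rect k X A hindep
  have hpair := sal_pair k X A hXmeas hAmeas hrect
  have hXA : ∀ e i, ∀ B : Set ℝ, MeasurableSet B →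
      (ℙ : Measure Ω).real (X e ⁻¹' B ∩ A e ⁻¹' {i}) =
        (ℙ : Measure Ω).real (X e ⁻¹' B) * (1 / k) := by
    intro e i B hB
    have h := hrect {e} (fun _ => B) (fun _ => {i}) (by simpa using hB)
    simp only [Finset.mem_singleton, Set.iInter_iInter_eq_left, Finset.prod_singleton] at h
    have hu : ℙ (A e ⁻¹' {i}) = (k : ENNReal)⁻¹ := hunif e i
    rw [measureReal_def, h, hu, ENNReal.toReal_mul, measureReal_def]
    simp
  have hq : (ℙ : Measure Ω).real {ω | ∀ e, X e ω < t} = p ^ k := by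
    rw [measureReal_def, ht, ENNReal.toReal_ofReal (by positivity)]
  have hfinM : ∀ ω, {x | ∃ e, x = X e ω}.Finite := by
    intro ω
    refine (Set.finite_range (fun e => X e ω)).subset ?_
    rintro x ⟨e, rfl⟩
    exact ⟨e, rfl⟩
  have hfinU : ∀ ω (i : Fin k), {x | ∃ e, A e ω = i ∧ t ≤ X e ω ∧ x = X e ω}.Finite := by
    intro ω i
    refine (Set.finite_range (fun e => X e ω)).subset ?_
    rintro x ⟨e, -, -, rfl⟩
    exact ⟨e, rfl⟩
  have hfinZ : ∀ ω, {v | ∃ i : Fin k, (∃ e, A e ω = i ∧ t ≤ X e ω) ∧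
        v = sInf {x | ∃ e, A e ω = i ∧ t ≤ X e ω ∧ x = X e ω}}.Finite := by
    intro ω
    refine (Set.finite_range
      (fun i => sInf {x | ∃ e, A e ω = i ∧ t ≤ X e ω ∧ x = X e ω})).subset ?_
    rintro v ⟨i, -, rfl⟩
    exact ⟨i, rfl⟩
  have hMlt : ∀ x, 0 ≤ x → {ω | x < sSup {x | ∃ e, x = X e ω}} = {ω | ∃ e, x < X e ω} := by
    intro x hx
    ext ω
    refine (sal_lt_sSup (hfinM ω) hx).trans ?_
    constructor
    · rintro ⟨_, ⟨e, rfl⟩, h⟩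
      exact ⟨e, h⟩
    · rintro ⟨e, h⟩
      exact ⟨_, ⟨e, rfl⟩, h⟩
  have hZlt : ∀ x, 0 ≤ x → {ω | x < sSup {v | ∃ i : Fin k, (∃ e, A e ω = i ∧ t ≤ X e ω) ∧
        v = sInf {x | ∃ e, A e ω = i ∧ t ≤ X e ω ∧ x = X e ω}}} =
      {ω | ∃ i, (∃ e, A e ω = i ∧ t ≤ X e ω) ∧
        ∀ e, A e ω = i → t ≤ X e ω → x < X e ω} := by
    intro x hx
    ext ω
    refine (sal_lt_sSup (hfinZ ω) hx).trans ?_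
    constructor
    · rintro ⟨_, ⟨i, hi, rfl⟩, h⟩
      exact ⟨i, hi, fun e h1 h2 => lt_of_lt_of_le h
        (csInf_le (hfinU ω i).bddBelow ⟨e, h1, h2, rfl⟩)⟩
    · rintro ⟨i, ⟨e, h1, h2⟩, h⟩
      refine ⟨_, ⟨i, ⟨e, h1, h2⟩, rfl⟩, ?_⟩
      have hne : {x | ∃ e, A e ω = i ∧ t ≤ X e ω ∧ x = X e ω}.Nonempty := ⟨X e ω, e, h1, h2, rfl⟩
      obtain ⟨e', h3, h4, h5⟩ := hne.csInf_mem (hfinU ω i)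
      rw [h5]
      exact h e' h3 h4
  have hM0 : ∀ ω, 0 ≤ sSup {x | ∃ e, x = X e ω} := by
    intro ω
    refine Real.sSup_nonneg ?_
    rintro _ ⟨e, rfl⟩
    exact hnonneg e ω
  have hZ0 : ∀ ω, 0 ≤ sSup {v | ∃ i : Fin k, (∃ e, A e ω = i ∧ t ≤ X e ω) ∧
        v = sInf {x | ∃ e, A e ω = i ∧ t ≤ X e ω ∧ x = X e ω}} := by
    intro ω
    refine Real.sSup_nonneg ?_
    rintro _ ⟨i, -, rfl⟩
    refine Real.sInf_nonneg ?_
    rintro _ ⟨e, -, -, rfl⟩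
    exact hnonneg e ω
  have hMm := sal_measurable hM0 (fun x hx => by
    rw [hMlt x hx]
    have : {ω | ∃ e, x < X e ω} = ⋃ e, X e ⁻¹' Set.Ioi x := by ext; simp
    rw [this]
    exact MeasurableSet.iUnion fun e => hXmeas e measurableSet_Ioi)
  have hZm := sal_measurable hZ0 (fun x hx => by
    rw [hZlt x hx]
    have : {ω | ∃ i, (∃ e, A e ω = i ∧ t ≤ X e ω) ∧
        ∀ e, A e ω = i → t ≤ X e ω → x < X e ω} =
        ⋃ i, ((⋃ e, (A e ⁻¹' {i} ∩ X e ⁻¹' Set.Ici t)) ∩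
          ⋂ e, ((A e ⁻¹' {i})ᶜ ∪ ((X e ⁻¹' Set.Ici t)ᶜ ∪ X e ⁻¹' Set.Ioi x))) := by
      ext ω
      simp only [Set.mem_ofPred_eq, Set.mem_iUnion, Set.mem_inter_iff, Set.mem_iInter,
        Set.mem_union, Set.mem_compl_iff, Set.mem_preimage, Set.mem_singleton_iff, Set.mem_Ici,
        Set.mem_Ioi, imp_iff_not_or]
    rw [this]
    refine MeasurableSet.iUnion fun i => ((MeasurableSet.iUnion fun e => ?_).inter
      (MeasurableSet.iInter fun e => ?_))
    · exact (hAmeas e (measurableSet_singleton i)).inter (hXmeas e measurableSet_Ici)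
    · exact (hAmeas e (measurableSet_singleton i)).compl.union
        ((hXmeas e measurableSet_Ici).compl.union (hXmeas e measurableSet_Ioi)))
  have hZi : Integrable (fun ω => sSup {v | ∃ i : Fin k, (∃ e, A e ω = i ∧ t ≤ X e ω) ∧
        v = sInf {x | ∃ e, A e ω = i ∧ t ≤ X e ω ∧ x = X e ω}}) ℙ := by
    refine Integrable.mono' (integrable_finsetSum Finset.univ (fun e _ => hint e))
      hZm.aestronglyMeasurable (.of_forall fun ω => ?_)
    rw [Real.norm_of_nonneg (hZ0 ω)]
    refine Real.sSup_le ?_ (Finset.sum_nonneg fun e _ => hnonneg e ω)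
    rintro _ ⟨i, ⟨e, h1, h2⟩, rfl⟩
    refine (csInf_le (hfinU ω i).bddBelow ⟨e, h1, h2, rfl⟩).trans ?_
    exact Finset.single_le_sum (f := fun e => X e ω) (fun e _ => hnonneg e ω) (Finset.mem_univ e)
  refine sal_integral hM0 hZ0 hMm hZm hZi p hp.le fun x hx => ?_
  rw [hMlt x hx.le, hZlt x hx.le]
  rcases le_or_gt t x with htx | htx
  · exact sal_key k hk X A hXmeas hAmeas hpair hXA p t hp.le hq x htx
  · have hmeas : MeasurableSet {ω | ∀ e, X e ω < t} := by
      have : {ω | ∀ e, X e ω < t} = ⋂ e, X e ⁻¹' Set.Iio t := by ext; simp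
      rw [this]
      exact MeasurableSet.iInter fun e => hXmeas e measurableSet_Iio
    calc p * (ℙ : Measure Ω).real {ω | ∃ e, x < X e ω} ≤ p * 1 :=
          mul_le_mul_of_nonneg_left measureReal_le_one hp.le
      _ = (ℙ : Measure Ω).real {ω | ∀ e, X e ω < t}ᶜ := by
          rw [probReal_compl_eq_one_sub hmeas, hq]
          linarith
      _ ≤ _ := by
          refine measureReal_mono ?_
          intro ω hω
          have hω' : ¬ ∀ e, X e ω < t := hω
          push Not at hω'
          obtain ⟨e, he⟩ := hω'
          exact ⟨A e ω, ⟨e, rfl, he⟩, fun e' _ h => lt_of_lt_of_le htx h⟩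
end
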